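/- arXiv:2510.23777 — 6 statements merged into one kernel-verified Lean document; each statement's English description precedes it below -/
import Mathlib

section
/- Let W be a subspace of V and G a finite subset of W \ {0}. Then G is a Gröbner basis for W if and only if, for every f ∈ V, one has f ∈ W if and only if f →_G+ 0. -/
/-!
A reduction step changes a vector by a multiple of an element of `G ⊆ W`, so it preserves
membership in `W` in both directions; hence anything reducing to `0` lies in `W`.

If `G` is a Gröbner basis, a nonzero `f ∈ W` can always be reduced at its leading index, and
this moves the leading index strictly to the right; after at most `n` steps the result is `0`
(`reducesTo_zero_of_vanish`).

Conversely, a step modulo `g` can only alter the leading entry of `f` if `lp g = lp f`. So if a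
nonzero `f` reduces to `0`, some step must use an element of `G` with the leading index of `f`
(`exists_isLp_of_reducesTo_zero`).
-/

/-!
Gröbner basis theory for a finite-dimensional vector space `V` over a field `k`
with a fixed ordered basis.  We model `V` as `Fin n → k`, the basis being the
standard basis `v_0, v_1, …, v_{n-1}` (coordinates), ordered `v_0 > v_1 > ⋯`.
-/

variable {k : Type*} [Field k] {n : ℕ}

/-- `IsLp v i` : the basis element indexed by `i` is the leading basis element of `v`,
i.e. `i` is the least index whose coefficient in `v` is nonzero
(the basis is ordered decreasingly along indices). -/
def IsLp (v : Fin n → k) (i : Fin n) : Prop :=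
  v i ≠ 0 ∧ ∀ j : Fin n, j < i → v j = 0

/-- `f` simply reduces to `r` modulo `g`. -/
def SimplyReduces (g f r : Fin n → k) : Prop :=
  ∃ i : Fin n, IsLp g i ∧ f i ≠ 0 ∧ r = f - (f i / g i) • g

/-- One step of reduction modulo (some element of) the finite set `G`. -/
def RedStep (G : Finset (Fin n → k)) (f r : Fin n → k) : Prop :=
  ∃ g ∈ G, SimplyReduces g f r

/-- `f →_G+ r` : `f` reduces to `r` by a finite (possibly empty) sequence of
simple reductions modulo elements of `G`. -/
def ReducesTo (G : Finset (Fin n → k)) (f r : Fin n → k) : Prop :=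
  Relation.ReflTransGen (RedStep G) f r

/-- `r` is reduced relative to `G`. -/
def ReducedRel (G : Finset (Fin n → k)) (r : Fin n → k) : Prop :=
  r = 0 ∨ ∀ g ∈ G, ∀ r' : Fin n → k, ¬ SimplyReduces g r r'

/-- `r` is a remainder of `f` modulo `G`. -/
def IsRemainder (G : Finset (Fin n → k)) (f r : Fin n → k) : Prop :=
  ReducesTo G f r ∧ ReducedRel G r

/-- `G` is a Gröbner basis for `W` : every nonzero `f ∈ W` has the same leading
basis element as some `g ∈ G`. -/
def IsGroebnerBasis (W : Submodule k (Fin n → k)) (G : Finset (Fin n → k)) : Prop :=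
  ∀ f ∈ W, f ≠ 0 → ∃ g ∈ G, ∃ i : Fin n, IsLp f i ∧ IsLp g i

theorem exists_isLp {f : Fin n → k} (hf : f ≠ 0) : ∃ i, IsLp f i := by
  obtain ⟨i, hi⟩ := Function.ne_iff.mp hf
  obtain ⟨m, hm, hmin⟩ := WellFounded.has_min (wellFounded_lt (α := Fin n)) {i | f i ≠ 0} ⟨i, hi⟩
  exact ⟨m, hm, fun j hj => by_contra fun h => hmin j h hj⟩

theorem mem_of_reducesTo_zero {W : Submodule k (Fin n → k)} {G : Finset (Fin n → k)}
    (hG : ∀ g ∈ G, g ∈ W) {f : Fin n → k} (h : ReducesTo G f 0) : f ∈ W := by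
  induction h using Relation.ReflTransGen.head_induction_on with
  | refl => exact W.zero_mem
  | head hstep _ ih =>
    obtain ⟨g, hg, i, _, _, rfl⟩ := hstep
    exact (W.sub_mem_iff_left (W.smul_mem _ (hG g hg))).mp ih

/-- The leading index of a vector that reduces to `0` is the leading index of some element
of `G`, since every other reduction step keeps the leading index unchanged. -/
theorem exists_isLp_of_reducesTo_zero {G : Finset (Fin n → k)} {f : Fin n → k}
    (h : ReducesTo G f 0) {i : Fin n} (hi : IsLp f i) : ∃ g ∈ G, IsLp g i := by
  induction h using Relation.ReflTransGen.head_induction_on with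
  | refl => exact absurd rfl hi.1
  | head hstep _ ih =>
    obtain ⟨g, hg, j, hj, hfj, rfl⟩ := hstep
    rcases lt_trichotomy j i with hlt | rfl | hlt
    · exact absurd (hi.2 j hlt) hfj
    · exact ⟨g, hg, hj⟩
    · refine ih ⟨?_, fun l hl => ?_⟩
      · simpa [hj.2 i hlt] using hi.1
      · simp [hj.2 l (hl.trans hlt), hi.2 l hl]

/-- Reduction at the leading index terminates at `0`: induction on the number `m` of trailing
coordinates on which an element of `W` may be nonzero. -/
theorem reducesTo_zero_of_vanish {W : Submodule k (Fin n → k)} {G : Finset (Fin n → k)}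
    (hG : ∀ g ∈ G, g ∈ W) (hGB : IsGroebnerBasis W G) (m : ℕ) :
    ∀ f ∈ W, (∀ j : Fin n, j.val + m < n → f j = 0) → ReducesTo G f 0 := by
  induction m with
  | zero =>
    intro f _ hf
    obtain rfl : f = 0 := funext fun j => hf j j.isLt
    exact Relation.ReflTransGen.refl
  | succ m ih =>
    intro f hfW hf
    by_cases h0 : f = 0
    · subst h0
      exact Relation.ReflTransGen.refl
    obtain ⟨g, hg, i, hfi, hgi⟩ := hGB f hfW h0
    refine Relation.ReflTransGen.head ⟨g, hg, i, hgi, hfi.1, rfl⟩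
      (ih _ (W.sub_mem hfW (W.smul_mem _ (hG g hg))) fun j hj => ?_)
    have hin : ¬ i.val + (m + 1) < n := fun h => hfi.1 (hf i h)
    have hji : j ≤ i := by
      rw [Fin.le_def]
      omega
    rcases hji.lt_or_eq with hlt | rfl
    · simp [hfi.2 j hlt, hgi.2 j hlt]
    · simp [div_mul_cancel₀ _ hgi.1]

theorem groebner_iff_reducesTo_zero (W : Submodule k (Fin n → k))
    (G : Finset (Fin n → k)) (hG : ∀ g ∈ G, g ∈ W ∧ g ≠ 0) :
    IsGroebnerBasis W G ↔ (∀ f : Fin n → k, f ∈ W ↔ ReducesTo G f 0) := by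
  have hGW : ∀ g ∈ G, g ∈ W := fun g hg => (hG g hg).1
  constructor
  · intro hGB f
    exact ⟨fun hf => reducesTo_zero_of_vanish hGW hGB n f hf fun j hj => by omega,
      mem_of_reducesTo_zero hGW⟩
  · intro h f hf h0
    obtain ⟨i, hi⟩ := exists_isLp h0
    obtain ⟨g, hg, hgi⟩ := exists_isLp_of_reducesTo_zero ((h f).mp hf) hi
    exact ⟨g, hg, i, hi, hgi⟩
end

section
/- Let W be a subspace of V and G a finite subset of W \ {0} which is a Gröbner basis for W. Then for every f ∈ V, any two remainders of f modulo G are equal. -/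
/-!
Two remainders `r₁`, `r₂` of `f` are both congruent to `f` modulo `W` (`ReducesTo.sub_mem`),
so `r₁ - r₂ ∈ W`. If this difference were nonzero, its leading index `i` would be the leading
index of some `g ∈ G`; but a reduced vector has zero coefficient at every such index
(`ReducedRel.apply_eq_zero`), so `r₁ - r₂` would vanish at `i`, a contradiction.
-/

/-!
Gröbner basis theory for a finite-dimensional vector space `V` over a field `k`
with a fixed ordered basis.  We model `V` as `Fin n → k`, the basis being the
standard basis `v_0, v_1, …, v_{n-1}` (coordinates), ordered `v_0 > v_1 > ⋯`.
-/

variable {k : Type*} [Field k] {n : ℕ}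

/-- Each reduction step subtracts a multiple of an element of `G ⊆ W`, so the class
modulo `W` never changes. -/
theorem ReducesTo.sub_mem {W : Submodule k (Fin n → k)} {G : Finset (Fin n → k)}
    (hG : ∀ g ∈ G, g ∈ W) {f r : Fin n → k} (h : ReducesTo G f r) : f - r ∈ W := by
  unfold ReducesTo at h
  induction h with
  | refl => simp
  | @tail b c _ hbc ih =>
    obtain ⟨g, hg, i, -, -, rfl⟩ := hbc
    have e : f - (b - (b i / g i) • g) = (f - b) + (b i / g i) • g := by abel
    rw [e]
    exact W.add_mem ih (W.smul_mem _ (hG g hg))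

theorem ReducedRel.apply_eq_zero {G : Finset (Fin n → k)} {r g : Fin n → k} {i : Fin n}
    (h : ReducedRel G r) (hg : g ∈ G) (hi : IsLp g i) : r i = 0 := by
  rcases h with rfl | h
  · rfl
  · by_contra hri
    exact h g hg _ ⟨i, hi, hri, rfl⟩

theorem groebner_remainders_unique (W : Submodule k (Fin n → k))
    (G : Finset (Fin n → k)) (hG : ∀ g ∈ G, g ∈ W ∧ g ≠ 0)
    (hGB : IsGroebnerBasis W G) :
    ∀ f r₁ r₂ : Fin n → k, IsRemainder G f r₁ → IsRemainder G f r₂ → r₁ = r₂ := by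
  intro f r₁ r₂ h₁ h₂
  by_contra hne
  have hW : r₁ - r₂ ∈ W := by
    have := W.sub_mem (h₂.1.sub_mem fun g hg => (hG g hg).1)
      (h₁.1.sub_mem fun g hg => (hG g hg).1)
    rwa [sub_sub_sub_cancel_left] at this
  obtain ⟨g, hg, i, hi, hgi⟩ := hGB _ hW (sub_ne_zero.mpr hne)
  apply hi.1
  rw [Pi.sub_apply, h₁.2.apply_eq_zero hg hgi, h₂.2.apply_eq_zero hg hgi, sub_zero]
end

section
/- For every f ∈ V and every finite set G ⊆ V \ {0}, there exists a remainder of f modulo G; that is, there exists r ∈ V reduced relative to G with f →_G+ r (every chain of simple reductions can be continued to terminate at a reduced element). -/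
/-!
A simple reduction of `f` modulo `g` with leading index `i` kills the coefficient at `i` and
changes no coefficient at an index `j < i`. Hence the support of `f` strictly decreases for the
lexicographic order on subsets of `Fin n` (`RedStep.supportLex_lt`). That order is well-founded,
so every chain of simple reductions terminates, and it can only stop at a reduced element.
-/

/-!
Gröbner basis theory for a finite-dimensional vector space `V` over a field `k`
with a fixed ordered basis.  We model `V` as `Fin n → k`, the basis being the
standard basis `v_0, v_1, …, v_{n-1}` (coordinates), ordered `v_0 > v_1 > ⋯`.
-/

variable {k : Type*} [Field k] {n : ℕ}

/-- The indicator of the support of `f`, as an element of `{False < True}ⁿ` ordered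
lexicographically with the leading coordinate (index `0`) most significant. -/
def supportLex (f : Fin n → k) : Lex (Fin n → Prop) :=
  toLex fun i => f i ≠ 0

theorem RedStep.supportLex_lt {G : Finset (Fin n → k)} {f r : Fin n → k}
    (h : RedStep G f r) : supportLex r < supportLex f := by
  obtain ⟨g, -, i, ⟨hgi, hg⟩, hfi, rfl⟩ := h
  refine ⟨i, fun j hj => ?_, ?_⟩
  · simp [supportLex, hg j hj]
  · simp [supportLex, hgi, hfi, lt_iff_le_not_ge]

theorem exists_remainder (G : Finset (Fin n → k))
    (hG : ∀ g ∈ G, g ≠ (0 : Fin n → k)) (f : Fin n → k) :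
    ∃ r : Fin n → k, IsRemainder G f r := by
  induction f using (InvImage.wf (supportLex (k := k) (n := n)) wellFounded_lt).induction with
  | _ f ih =>
    by_cases h : ∃ r, RedStep G f r
    · obtain ⟨r, hr⟩ := h
      obtain ⟨s, hs, hs'⟩ := ih r hr.supportLex_lt
      exact ⟨s, .head hr hs, hs'⟩
    · exact ⟨f, .refl, .inr fun g hg r' hr' => h ⟨r', g, hg, hr'⟩⟩
end

section
/- Let Δ be a translation quiver and x, y vertices such that every path from x to y is closed. Let β_1, …, β_n be all the arrows starting at x and ending at a predecessor of y, with a fixed total order β_1 ⪯ … ⪯ β_n. Then there exists a family of total orders <_γ (for each path γ : x ⇝ z with z a predecessor of y, a total order on the arrows starting at z and ending at a predecessor of y) such that the induced lexicographic order < on the paths from x to y satisfies: (1) < is mesh-lexicographic; (2) <_γ = <_{γ′} whenever γ = α_m⋯α_1 and γ′ = α′_m⋯α′_1 are paths starting at x such that for every 1 ≤ i ≤ m the arrows α_i and α′_i have the same start vertex and the same end vertex; and (3) the order <_{ε_x} attached to the trivial path at x coincides with ⪯, i.e. β_1 <_{ε_x} … <_{ε_x} β_n. -/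
/-!
The orders `<_γ` are built by recursion on the length of `γ`. The trivial path gets the
prescribed order. For a path `αγ` with `α : z ⟶ z'`, the mesh condition only asks that one
particular arrow starting at `z'` be the smallest one: if `z = τ w` and the `<_γ`-largest arrow
starting at `z` happens to end at `z'`, then its image under `σ⁻¹` must come first. There is at
most one such arrow (`meshFirst_unique`), because `τ` is injective and a strict order has at most
one largest element. Hence an arbitrary total order can be taken and that arrow moved to the
front. The construction uses only `<_γ` and the vertices `z`, `z'`, never the arrow `α` itself, so
`<_γ` depends only on the sequence of vertices visited by `γ`.
-/

/-!
Translation quivers, paths, mesh relations, mesh-canonical relations,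
(mesh-)lexicographic orders, walks and homotopy, following
Chaio–Le Meur–Trepode and Riedtmann/Bongartz–Gabriel.
-/

/-- A (locally finite) translation quiver: a quiver without loops with a partially
defined injective translation `tau` (defined exactly on the non-projective vertices;
the vertices outside its range are the injective ones) and, for every non-projective
vertex `w` and every vertex `u`, a bijection `sigma` from the arrows `u ⟶ w` to the
arrows `tau w ⟶ u`. -/
structure TranslationQuiver where
  V : Type
  Arrow : V → V → Type
  fintypeHom : ∀ a b : V, Fintype (Arrow a b)
  fintypeOut : ∀ a : V, Fintype ((b : V) × Arrow a b)
  fintypeIn : ∀ a : V, Fintype ((b : V) × Arrow b a)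
  noLoops : ∀ a : V, IsEmpty (Arrow a a)
  /-- `Proj x` means that the vertex `x` is projective. -/
  Proj : V → Prop
  tau : {x : V // ¬ Proj x} → V
  tau_inj : Function.Injective tau
  sigma : ∀ (w : {x : V // ¬ Proj x}) (u : V), Arrow u w.1 ≃ Arrow (tau w) u

attribute [instance] TranslationQuiver.fintypeHom TranslationQuiver.fintypeOut
  TranslationQuiver.fintypeIn

instance (T : TranslationQuiver) : Quiver T.V := ⟨T.Arrow⟩

namespace TranslationQuiver

/-- A vertex is injective iff it is not in the range of the translation. -/
def Inj (T : TranslationQuiver) (x : T.V) : Prop := x ∉ Set.range T.tau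

/-- `z` is a predecessor of `y` (there is a path `z ⇝ y`). -/
def PredOf (T : TranslationQuiver) (y z : T.V) : Prop := Nonempty (Quiver.Path z y)

/-- `u` has at least two immediate successors. -/
def TwoSucc (T : TranslationQuiver) (u : T.V) : Prop :=
  ∃ v v' : T.V, v ≠ v' ∧ Nonempty (T.Arrow u v) ∧ Nonempty (T.Arrow u v')

/-- The closedness condition for two consecutive arrows `u ⟶ v ⟶ w` of a path:
if `w` is non-projective and `τ w = u` then `u` must have at least two
immediate successors. -/
def ClosedCons (T : TranslationQuiver) {u v w : T.V}
    (_e₁ : T.Arrow u v) (_e₂ : T.Arrow v w) : Prop :=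
  ∀ hw : ¬ T.Proj w, T.tau ⟨w, hw⟩ = u → T.TwoSucc u

/-- A path is closed if every pair of consecutive arrows satisfies `ClosedCons`. -/
def Closed (T : TranslationQuiver) : ∀ {x y : T.V}, Quiver.Path x y → Prop
  | _, _, .nil => True
  | _, _, .cons .nil _ => True
  | _, _, .cons (.cons p e₁) e₂ =>
      Closed T (Quiver.Path.cons p e₁) ∧ T.ClosedCons e₁ e₂

/-- The list of vertices visited by a path (from the end vertex backwards). -/
def vertList (T : TranslationQuiver) : ∀ {x y : T.V}, Quiver.Path x y → List T.V
  | _, y, .nil => [y]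
  | _, y, .cons p _ => y :: vertList T p

/-- The length-two path `τ w ⟶ u ⟶ w` through the mesh ending at `w`
determined by an arrow `β : u ⟶ w`. -/
def meshPath (T : TranslationQuiver) {w : T.V} (hw : ¬ T.Proj w)
    (β : (u : T.V) × T.Arrow u w) : Quiver.Path (T.tau ⟨w, hw⟩) w :=
  (Quiver.Hom.toPath (T.sigma ⟨w, hw⟩ β.1 β.2)).cons β.2

/-- The set of mesh-canonical relations between `x` and `y` in `kΔ(x,y)`
(the vector space with basis the paths from `x` to `y`, modelled as finitely
supported functions on paths): the elements `γ₂ m_z γ₁` with `z = τ w`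
non-injective, `γ₁ : x ⇝ z` and `γ₂ : τ⁻¹ z = w ⇝ y`. -/
def MeshCanonical (T : TranslationQuiver) (k : Type) [Field k] (x y : T.V) :
    Set (Quiver.Path x y →₀ k) :=
  { r | ∃ (w : T.V) (hw : ¬ T.Proj w) (γ₁ : Quiver.Path x (T.tau ⟨w, hw⟩))
      (γ₂ : Quiver.Path w y),
      r = ∑ β : (u : T.V) × T.Arrow u w,
        Finsupp.single ((γ₁.comp (meshPath T hw β)).comp γ₂) (1 : k) }

/-- The mesh-canonical relations between `x` and `y` of length `m`. -/
def MeshCanonicalLen (T : TranslationQuiver) (k : Type) [Field k] (x y : T.V) (m : ℕ) :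
    Set (Quiver.Path x y →₀ k) :=
  { r | ∃ (w : T.V) (hw : ¬ T.Proj w) (γ₁ : Quiver.Path x (T.tau ⟨w, hw⟩))
      (γ₂ : Quiver.Path w y),
      γ₁.length + 2 + γ₂.length = m ∧
      r = ∑ β : (u : T.V) × T.Arrow u w,
        Finsupp.single ((γ₁.comp (meshPath T hw β)).comp γ₂) (1 : k) }

/-- The mesh-canonical relations derived from the mesh of `x = τ w`
(those of the form `γ₂ m_x` with `γ₂ : τ⁻¹ x = w ⇝ y`). -/
def MeshAtSet (T : TranslationQuiver) (k : Type) [Field k] {w : T.V}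
    (hw : ¬ T.Proj w) (y : T.V) : Set (Quiver.Path (T.tau ⟨w, hw⟩) y →₀ k) :=
  { r | ∃ γ₂ : Quiver.Path w y,
      r = ∑ β : (u : T.V) × T.Arrow u w,
        Finsupp.single ((meshPath T hw β).comp γ₂) (1 : k) }

/-- For `x = τ w` non-injective, an arrow `a = (α : x ⟶ v)` starting at `x` and
`s ∈ kΔ(w, y)`, the element `s_α = s (σ⁻¹ α) α` of `kΔ(x, y)`. -/
noncomputable def derComesh (T : TranslationQuiver) (k : Type) [Field k] {w : T.V}
    (hw : ¬ T.Proj w) {y : T.V} (a : (v : T.V) × T.Arrow (T.tau ⟨w, hw⟩) v)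
    (s : Quiver.Path w y →₀ k) : Quiver.Path (T.tau ⟨w, hw⟩) y →₀ k :=
  Finsupp.mapDomain
    (fun p => (((Quiver.Hom.toPath a.2).cons ((T.sigma ⟨w, hw⟩ a.1).symm a.2)).comp p)) s

/-- The arrows starting at `z`. -/
abbrev OutArrow (T : TranslationQuiver) (z : T.V) := (v : T.V) × T.Arrow z v

/-- A family of orders, one for each path `γ : x ⇝ z`, on the arrows starting at
the end vertex `z` of `γ`. -/
abbrev OFam (T : TranslationQuiver) (x : T.V) :=
  ∀ z : T.V, Quiver.Path x z → OutArrow T z → OutArrow T z → Prop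

/-- `O` is a family of (strict) total orders on the arrows starting at the
end vertices of paths `x ⇝ z` and ending at predecessors of `y`. -/
def IsOrderFamily (T : TranslationQuiver) (x y : T.V) (O : OFam T x) : Prop :=
  ∀ (z : T.V) (γ : Quiver.Path x z),
    (∀ a : OutArrow T z, ¬ O z γ a a) ∧
    (∀ a b c : OutArrow T z, O z γ a b → O z γ b c → O z γ a c) ∧
    (∀ a b : OutArrow T z, T.PredOf y a.1 → T.PredOf y b.1 → a ≠ b →
      O z γ a b ∨ O z γ b a)

/-- The lexicographic order on the paths from `x` to `y` induced by the family `O`: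
`δ < δ'` iff, `γ` being the longest common initial subpath of `δ` and `δ'` and
`a`, `a'` the arrows with which `δ`, `δ'` respectively continue after `γ`,
one has `a <_γ a'`. -/
def LexLt (T : TranslationQuiver) {x y : T.V} (O : OFam T x)
    (δ δ' : Quiver.Path x y) : Prop :=
  ∃ (z : T.V) (γ : Quiver.Path x z) (a a' : OutArrow T z)
    (δ₁ : Quiver.Path a.1 y) (δ₁' : Quiver.Path a'.1 y),
    a ≠ a' ∧ δ = (γ.cons a.2).comp δ₁ ∧ δ' = (γ.cons a'.2).comp δ₁' ∧ O z γ a a'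

/-- The order family `O` is mesh-lexicographic (for paths from `x` to `y`):
it is a family of total orders and, whenever `γ : x ⇝ z` with `z = τ w`
non-injective, `w = τ⁻¹ z` a predecessor of `y`, and `α : z ⟶ z'` the
`<_γ`-largest arrow starting at `z` and ending at a predecessor of `y`,
the arrow `σ⁻¹ α : z' ⟶ w` is `≤_{αγ} β` for every arrow `β : z' ⟶ v` with `v`
a predecessor of `y`. -/
def IsMeshLex (T : TranslationQuiver) (x y : T.V) (O : OFam T x) : Prop :=
  IsOrderFamily T x y O ∧
  ∀ (w : T.V) (hw : ¬ T.Proj w) (γ : Quiver.Path x (T.tau ⟨w, hw⟩))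
    (z' : T.V) (α : T.Arrow (T.tau ⟨w, hw⟩) z'),
    T.PredOf y w → T.PredOf y z' →
    (∀ b : OutArrow T (T.tau ⟨w, hw⟩), T.PredOf y b.1 →
      b ≠ ⟨z', α⟩ → O _ γ b ⟨z', α⟩) →
    ∀ (v : T.V) (β : T.Arrow z' v), T.PredOf y v →
      (⟨v, β⟩ : OutArrow T z') ≠ ⟨w, (T.sigma ⟨w, hw⟩ z').symm α⟩ →
      O z' (γ.cons α) ⟨w, (T.sigma ⟨w, hw⟩ z').symm α⟩ ⟨v, β⟩

/-- `p` is the leading basis element (the largest path occurring with nonzero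
coefficient) of `f ∈ kΔ(x,y)`, with respect to the lexicographic order induced
by the order family `O`. -/
def IsLpPath (T : TranslationQuiver) {k : Type} [Field k] {x y : T.V} (O : OFam T x)
    (f : Quiver.Path x y →₀ k) (p : Quiver.Path x y) : Prop :=
  f p ≠ 0 ∧ ∀ q : Quiver.Path x y, f q ≠ 0 → q ≠ p → LexLt T O q p

/-- Walks on a translation quiver: formal compositions of arrows and inverses
of arrows. -/
inductive Walk (T : TranslationQuiver) : T.V → T.V → Type
  | nil (a : T.V) : Walk T a a
  | consFwd {a b c : T.V} : Walk T a b → T.Arrow b c → Walk T a c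
  | consBwd {a b c : T.V} : Walk T a b → T.Arrow c b → Walk T a c

/-- Composition of walks. -/
def Walk.comp {T : TranslationQuiver} : ∀ {a b c : T.V}, Walk T a b → Walk T b c → Walk T a c
  | _, _, _, p, .nil _ => p
  | _, _, _, p, .consFwd q e => .consFwd (p.comp q) e
  | _, _, _, p, .consBwd q e => .consBwd (p.comp q) e

/-- A path is in particular a walk. -/
def pathToWalk (T : TranslationQuiver) : ∀ {a b : T.V}, Quiver.Path a b → Walk T a b
  | a, _, .nil => .nil a
  | _, _, .cons p e => .consFwd (pathToWalk T p) e

/-- Homotopy of walks: the smallest equivalence relation such that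
(a) `α α⁻¹ ∼ ε` and `α⁻¹ α ∼ ε`; (b) `α (σ α) ∼ α' (σ α')` for arrows `α, α'`
ending at a non-projective vertex; (c) it is compatible with composition; and
(d) `α ∼ β` for parallel arrows. -/
inductive Homotopic (T : TranslationQuiver) : ∀ {a b : T.V}, Walk T a b → Walk T a b → Prop
  | refl {a b : T.V} (p : Walk T a b) : Homotopic T p p
  | symm {a b : T.V} {p q : Walk T a b} : Homotopic T p q → Homotopic T q p
  | trans {a b : T.V} {p q r : Walk T a b} :
      Homotopic T p q → Homotopic T q r → Homotopic T p r
  | cancel_left {a b : T.V} (e : T.Arrow a b) :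
      Homotopic T (((Walk.nil a).consFwd e).consBwd e) (Walk.nil a)
  | cancel_right {a b : T.V} (e : T.Arrow a b) :
      Homotopic T (((Walk.nil b).consBwd e).consFwd e) (Walk.nil b)
  | mesh {w : T.V} (hw : ¬ T.Proj w) {u u' : T.V} (β : T.Arrow u w) (β' : T.Arrow u' w) :
      Homotopic T
        (((Walk.nil (T.tau ⟨w, hw⟩)).consFwd (T.sigma ⟨w, hw⟩ u β)).consFwd β)
        (((Walk.nil (T.tau ⟨w, hw⟩)).consFwd (T.sigma ⟨w, hw⟩ u' β')).consFwd β')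
  | comp_congr {a b c d : T.V} {p q : Walk T b c} (w₁ : Walk T a b) (w₂ : Walk T c d) :
      Homotopic T p q → Homotopic T ((w₁.comp p).comp w₂) ((w₁.comp q).comp w₂)
  | par {a b : T.V} (e e' : T.Arrow a b) :
      Homotopic T ((Walk.nil a).consFwd e) ((Walk.nil a).consFwd e')

end TranslationQuiver

namespace TranslationQuiver

/-- `a` is the largest arrow, for the relation `r`, among the arrows starting at `z` and ending
at a predecessor of `y`. The end vertex of `a` is not required here to be a predecessor of `y`. -/
def IsLargest (T : TranslationQuiver) (y : T.V) {z : T.V}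
    (r : OutArrow T z → OutArrow T z → Prop) (a : OutArrow T z) : Prop :=
  ∀ b : OutArrow T z, T.PredOf y b.1 → b ≠ a → r b a

/-- `b` is the arrow starting at `z'` which the mesh condition forces to come first after
`z ⟶ z'`, when the arrows starting at `z` are ordered by `r`: one has `z = τ w` and `b = σ⁻¹ α`
for an `r`-largest arrow `α : z ⟶ z'`. The equality `z = τ w` is kept as a hypothesis and `r` is
transported along it. -/
def MeshFirst (T : TranslationQuiver) (y : T.V) {z : T.V}
    (r : OutArrow T z → OutArrow T z → Prop) (z' : T.V) (b : OutArrow T z') : Prop :=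
  ∃ (w : T.V) (hw : ¬ T.Proj w) (h : z = T.tau ⟨w, hw⟩) (α : T.Arrow (T.tau ⟨w, hw⟩) z'),
    T.PredOf y z' ∧ IsLargest T y (h ▸ r) ⟨z', α⟩ ∧ b = ⟨w, (T.sigma ⟨w, hw⟩ z').symm α⟩

/-- An arbitrary well-order on a type, modified by moving the elements satisfying `Q` to the
front. -/
def frontOrder {A : Type} (Q : A → Prop) (a b : A) : Prop :=
  (Q a ∧ ¬ Q b) ∨ ((Q a ↔ Q b) ∧ WellOrderingRel a b)

theorem frontOrder_irrefl {A : Type} (Q : A → Prop) (a : A) : ¬ frontOrder Q a a := by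
  rintro (⟨h, h'⟩ | ⟨-, h⟩)
  · exact h' h
  · exact irrefl_of WellOrderingRel a h

theorem frontOrder_trans {A : Type} (Q : A → Prop) (a b c : A)
    (hab : frontOrder Q a b) (hbc : frontOrder Q b c) : frontOrder Q a c := by
  have ht : WellOrderingRel a b → WellOrderingRel b c → WellOrderingRel a c :=
    fun h h' => trans_of WellOrderingRel h h'
  unfold frontOrder at *
  tauto

theorem frontOrder_total {A : Type} (Q : A → Prop) (a b : A) (hne : a ≠ b) :
    frontOrder Q a b ∨ frontOrder Q b a := by
  have ht : WellOrderingRel a b ∨ a = b ∨ WellOrderingRel b a :=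
    trichotomous_of WellOrderingRel a b
  unfold frontOrder
  tauto

/-- The family of orders attached to the paths starting at `x`, with the order `P` attached to
the trivial path. -/
def meshOrder (T : TranslationQuiver) (x y : T.V) (P : OutArrow T x → OutArrow T x → Prop) :
    ∀ z : T.V, Quiver.Path x z → OutArrow T z → OutArrow T z → Prop
  | _, .nil => P
  | z', .cons (b := z) γ _ => frontOrder (MeshFirst T y (meshOrder T x y P z γ) z')

theorem meshFirst_unique (T : TranslationQuiver) (y : T.V) {z : T.V}
    (r : OutArrow T z → OutArrow T z → Prop) (hirr : ∀ a, ¬ r a a)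
    (htrans : ∀ a b c, r a b → r b c → r a c) (z' : T.V) (b b' : OutArrow T z')
    (hb : MeshFirst T y r z' b) (hb' : MeshFirst T y r z' b') : b = b' := by
  obtain ⟨w, hw, h, α, hy, hα, rfl⟩ := hb
  obtain ⟨w', hw', h', α', -, hα', rfl⟩ := hb'
  obtain rfl : w = w' := congrArg Subtype.val (T.tau_inj (h.symm.trans h'))
  subst h
  by_cases hne : (⟨z', α⟩ : OutArrow T _) = ⟨z', α'⟩
  · obtain rfl : α = α' := by simpa using hne
    rfl
  · exact absurd (htrans _ _ _ (hα' _ hy hne) (hα _ hy (Ne.symm hne))) (hirr _)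

theorem vertList_eq_cons (T : TranslationQuiver) {x z : T.V} (γ : Quiver.Path x z) :
    ∃ l, vertList T γ = z :: l := by
  cases γ with
  | nil => exact ⟨[], by simp [vertList]⟩
  | cons p e => exact ⟨vertList T p, by simp [vertList]⟩

theorem meshOrder_congr (T : TranslationQuiver) (x y : T.V)
    (P : OutArrow T x → OutArrow T x → Prop) {z : T.V} (γ : Quiver.Path x z) :
    ∀ γ' : Quiver.Path x z, vertList T γ = vertList T γ' →
      meshOrder T x y P z γ = meshOrder T x y P z γ' := by
  induction γ with
  | nil =>
    intro γ' h
    cases γ' with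
    | nil => rfl
    | cons p e =>
      obtain ⟨l, hl⟩ := vertList_eq_cons T p
      simp [vertList, hl] at h
  | @cons u v p e ih =>
    intro γ' h
    cases γ' with
    | nil =>
      obtain ⟨l, hl⟩ := vertList_eq_cons T p
      simp [vertList, hl] at h
    | @cons u' _ p' e' =>
      have h1 : vertList T p = vertList T p' := by simpa [vertList] using h
      obtain ⟨l', hl'⟩ := vertList_eq_cons T p'
      obtain ⟨l, hl⟩ := vertList_eq_cons T p
      -- The two paths pass through the same penultimate vertex.
      obtain rfl : u = u' := by
        rw [hl, hl'] at h1
        exact (List.cons.inj h1).1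
      simp only [meshOrder, ih p' h1]

end TranslationQuiver

open TranslationQuiver in
/-- Existence of mesh-lexicographic orders. -/
theorem exists_mesh_lexicographic_order (T : TranslationQuiver) (x y : T.V)
    (hclosed : ∀ p : Quiver.Path x y, T.Closed p)
    (P : OutArrow T x → OutArrow T x → Prop)
    (hPirr : ∀ a : OutArrow T x, ¬ P a a)
    (hPtrans : ∀ a b c : OutArrow T x, P a b → P b c → P a c)
    (hPtotal : ∀ a b : OutArrow T x, T.PredOf y a.1 → T.PredOf y b.1 → a ≠ b →
      P a b ∨ P b a) :
    ∃ O : OFam T x,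
      IsMeshLex T x y O ∧
      (∀ (z : T.V) (γ γ' : Quiver.Path x z), vertList T γ = vertList T γ' →
        O z γ = O z γ') ∧
      (∀ a b : OutArrow T x, T.PredOf y a.1 → T.PredOf y b.1 →
        (O x Quiver.Path.nil a b ↔ P a b)) := by
  have hstrict : ∀ (z : T.V) (γ : Quiver.Path x z),
      (∀ a, ¬ meshOrder T x y P z γ a a) ∧
      (∀ a b c, meshOrder T x y P z γ a b → meshOrder T x y P z γ b c →
        meshOrder T x y P z γ a c) ∧
      (∀ a b : OutArrow T z, T.PredOf y a.1 → T.PredOf y b.1 → a ≠ b →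
        meshOrder T x y P z γ a b ∨ meshOrder T x y P z γ b a) := by
    intro z γ
    cases γ with
    | nil => exact ⟨hPirr, hPtrans, hPtotal⟩
    | cons p e =>
      exact ⟨frontOrder_irrefl _, frontOrder_trans _,
        fun a b _ _ hne => frontOrder_total _ a b hne⟩
  refine ⟨meshOrder T x y P, ⟨hstrict, ?_⟩, fun z γ γ' h => meshOrder_congr T x y P γ γ' h,
    fun a b _ _ => Iff.rfl⟩
  intro w hw γ z' α _ hz' hmax v β _ hne
  have hfirst : MeshFirst T y (meshOrder T x y P _ γ) z'
      ⟨w, (T.sigma ⟨w, hw⟩ z').symm α⟩ := ⟨w, hw, rfl, α, hz', hmax, rfl⟩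
  exact Or.inl ⟨hfirst, fun hβ => hne (meshFirst_unique T y _ (hstrict _ γ).1
    (hstrict _ γ).2.1 z' _ _ hβ hfirst)⟩
end

section
/- Let Δ be a translation quiver and x, y vertices such that every path from x to y is closed, and fix a mesh-lexicographic order on the set of paths from x to y. Then there exists a subset S(x,y) ⊆ R(x,y) such that: (1) for every pair of distinct relations r, s ∈ S(x,y), lp(r) ≠ lp(s); and (2) every relation r ∈ R(x,y) \ S(x,y) is a linear combination of elements of S(x,y). -/
namespace TranslationQuiver

/-! ### Prefixes of paths -/

/-- Two factorisations of the same path are comparable: the shorter prefix is a prefix of the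
longer one. -/
lemma exists_comp_of_comp_eq {T : TranslationQuiver} {x y a b : T.V}
    (γ : Quiver.Path x a) (δ : Quiver.Path a y) (γ' : Quiver.Path x b) (δ' : Quiver.Path b y)
    (h : γ.comp δ = γ'.comp δ') (hl : γ.length ≤ γ'.length) :
    ∃ ε : Quiver.Path a b, γ' = γ.comp ε ∧ δ = ε.comp δ' := by
  induction δ' with
  | nil => exact ⟨δ, by simpa using h.symm, rfl⟩
  | cons d e ih =>
    cases δ with
    | nil =>
      have := congrArg Quiver.Path.length h
      simp at this
      omega
    | cons d2 e2 =>
      simp only [Quiver.Path.comp_cons] at h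
      obtain rfl := Quiver.Path.obj_eq_of_cons_eq_cons h
      have h1 := eq_of_heq (Quiver.Path.heq_of_cons_eq_cons h)
      have h2 := eq_of_heq (Quiver.Path.hom_heq_of_cons_eq_cons h)
      subst h2
      obtain ⟨ε, h3, h4⟩ := ih d2 h1
      exact ⟨ε, h3, by rw [h4]; rfl⟩

lemma eq_of_cons_comp_eq {T : TranslationQuiver} {x y a v v' : T.V} (γ : Quiver.Path x a)
    (e : T.Arrow a v) (e' : T.Arrow a v') (δ : Quiver.Path v y) (δ' : Quiver.Path v' y)
    (h : (Quiver.Path.cons γ e).comp δ = (Quiver.Path.cons γ e').comp δ') :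
    (⟨v, e⟩ : OutArrow T a) = ⟨v', e'⟩ ∧ HEq δ δ' := by
  obtain ⟨ε, h1, h2⟩ := exists_comp_of_comp_eq _ _ _ _ h (by simp)
  cases ε with
  | nil =>
    simp only [Quiver.Path.comp_nil] at h1
    have := eq_of_heq (Quiver.Path.hom_heq_of_cons_eq_cons h1)
    subst this
    exact ⟨rfl, by simpa using h2⟩
  | cons d f =>
    have := congrArg Quiver.Path.length h1
    simp at this
    omega

/-- If a path continues both as `γ, a` and as `γ', a'` with `γ` strictly shorter than `γ'`, then
`γ'` itself continues `γ` through `a`. -/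
lemma exists_cons_comp_of_lt {T : TranslationQuiver} {x y z z' v v' : T.V}
    (γ : Quiver.Path x z) (a : T.Arrow z v) (δ : Quiver.Path v y)
    (γ' : Quiver.Path x z') (a' : T.Arrow z' v') (δ' : Quiver.Path v' y)
    (h : (Quiver.Path.cons γ a).comp δ = (Quiver.Path.cons γ' a').comp δ')
    (hl : γ.length < γ'.length) :
    ∃ ε : Quiver.Path v z', γ' = (Quiver.Path.cons γ a).comp ε ∧
      δ = (Quiver.Path.cons ε a').comp δ' := by
  have h' : (Quiver.Path.cons γ a).comp δ
      = γ'.comp ((Quiver.Hom.toPath (V := T.V) a').comp δ') := by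
    rw [h, ← Quiver.Path.comp_assoc, Quiver.Path.comp_toPath_eq_cons]
  obtain ⟨ε, h1, h2⟩ := exists_comp_of_comp_eq _ _ _ _ h'
    (by simp only [Quiver.Path.length_cons]; omega)
  exact ⟨ε, h1, by
    rw [h2, ← Quiver.Path.comp_assoc, Quiver.Path.comp_toPath_eq_cons]⟩

lemma closedCons_of_closed {T : TranslationQuiver} {x y u v w : T.V} (γ : Quiver.Path x u)
    (e₁ : T.Arrow u v) (e₂ : T.Arrow v w) (δ : Quiver.Path w y)
    (h : T.Closed ((Quiver.Path.cons (Quiver.Path.cons γ e₁) e₂).comp δ)) :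
    T.ClosedCons e₁ e₂ := by
  induction δ with
  | nil =>
    rw [Quiver.Path.comp_nil, Closed] at h
    exact h.2
  | cons d f ih =>
    apply ih
    cases d with
    | nil =>
      rw [Quiver.Path.comp_cons, Quiver.Path.comp_nil, Closed] at h
      exact h.1
    | cons d' f' =>
      rw [Quiver.Path.comp_cons, Quiver.Path.comp_cons, Closed] at h
      exact h.1

lemma exists_eq_toPath {T : TranslationQuiver} {a b : T.V} (ε : Quiver.Path a b)
    (h : ε.length = 1) : ∃ e : T.Arrow a b, ε = Quiver.Hom.toPath (V := T.V) e := by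
  cases ε with
  | nil => simp at h
  | cons d e =>
    cases d with
    | nil => exact ⟨e, rfl⟩
    | cons d' e' => simp at h

/-! ### The lexicographic order -/

lemma lexLt_irrefl {T : TranslationQuiver} {x y : T.V} (O : OFam T x) (p : Quiver.Path x y) :
    ¬ LexLt T O p p := by
  rintro ⟨z, γ, a, a', δ₁, δ₁', hne, h1, h2, -⟩
  exact hne (eq_of_cons_comp_eq γ a.2 a'.2 δ₁ δ₁' (h1.symm.trans h2)).1

lemma lexLt_trans {T : TranslationQuiver} {x y : T.V} {O : OFam T x}
    (hO : IsOrderFamily T x y O) {p q r : Quiver.Path x y}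
    (hpq : LexLt T O p q) (hqr : LexLt T O q r) : LexLt T O p r := by
  obtain ⟨z, γ, a, a', δ₁, δ₁', hne, rfl, h2, hlt⟩ := hpq
  obtain ⟨z', γ', b, b', ε₁, ε₁', hne', h3, rfl, hlt'⟩ := hqr
  have h := h2.symm.trans h3
  rcases lt_trichotomy γ.length γ'.length with hl | hl | hl
  · obtain ⟨ε, rfl, -⟩ := exists_cons_comp_of_lt _ _ _ _ _ _ h hl
    exact ⟨z, γ, a, a', δ₁, (Quiver.Path.cons ε b'.2).comp ε₁', hne, rfl,
      by rw [← Quiver.Path.comp_assoc]; rfl, hlt⟩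
  · have h' : γ.comp ((Quiver.Hom.toPath (V := T.V) a'.2).comp δ₁')
        = γ'.comp ((Quiver.Hom.toPath (V := T.V) b.2).comp ε₁) := by
      rw [← Quiver.Path.comp_assoc, ← Quiver.Path.comp_assoc, Quiver.Path.comp_toPath_eq_cons,
        Quiver.Path.comp_toPath_eq_cons, h]
    obtain ⟨ε, h4, -⟩ := exists_comp_of_comp_eq _ _ _ _ h' hl.le
    have hε : ε.length = 0 := by
      have := congrArg Quiver.Path.length h4
      simp only [Quiver.Path.length_comp] at this
      omega
    obtain rfl := Quiver.Path.eq_of_length_zero ε hε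
    obtain rfl := Quiver.Path.eq_nil_of_length_zero ε hε
    simp only [Quiver.Path.comp_nil] at h4
    subst h4
    have hab : a' = b := (eq_of_cons_comp_eq _ _ _ _ _ h).1
    subst hab
    have hac := (hO z γ').2.1 _ _ _ hlt hlt'
    refine ⟨z, γ', a, b', δ₁, ε₁', ?_, rfl, rfl, hac⟩
    rintro rfl
    exact (hO z γ').1 _ hac
  · obtain ⟨ε, rfl, -⟩ := exists_cons_comp_of_lt _ _ _ _ _ _ h.symm hl
    exact ⟨z', γ', b, b', (Quiver.Path.cons ε a.2).comp δ₁, ε₁', hne',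
      by rw [← Quiver.Path.comp_assoc]; rfl, rfl, hlt'⟩

lemma isLpPath_unique {T : TranslationQuiver} {k : Type} [Field k] {x y : T.V} {O : OFam T x}
    (hO : IsOrderFamily T x y O) {f : Quiver.Path x y →₀ k} {p q : Quiver.Path x y}
    (hp : IsLpPath T O f p) (hq : IsLpPath T O f q) : p = q := by
  by_contra hne
  exact lexLt_irrefl O p (lexLt_trans hO (hq.2 p hp.1 hne) (hp.2 q hq.1 (Ne.symm hne)))

lemma finite_paths_length (T : TranslationQuiver) (x : T.V) (n : ℕ) :
    Finite {p : (z : T.V) × Quiver.Path x z // p.2.length = n} := by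
  induction n with
  | zero =>
    have : Subsingleton {p : (z : T.V) × Quiver.Path x z // p.2.length = 0} := by
      constructor
      rintro ⟨⟨z, p⟩, hp⟩ ⟨⟨z', p'⟩, hp'⟩
      cases p <;> cases p' <;> first | rfl | (simp at hp; done) | (simp at hp')
    infer_instance
  | succ n ih =>
    -- A path of length `n + 1` is a path of length `n` followed by one of finitely many arrows.
    let f : ((q : {p : (z : T.V) × Quiver.Path x z // p.2.length = n}) × OutArrow T q.1.1) →
        {p : (z : T.V) × Quiver.Path x z // p.2.length = n + 1} :=
      fun q => ⟨⟨q.2.1, Quiver.Path.cons q.1.1.2 q.2.2⟩, by simp [q.1.2]⟩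
    apply Finite.of_surjective f
    rintro ⟨⟨z, p⟩, hp⟩
    cases p with
    | nil => simp at hp
    | cons d e => exact ⟨⟨⟨⟨_, d⟩, by simpa using hp⟩, ⟨_, e⟩⟩, rfl⟩

/-- The lexicographic order is well founded on the finitely many paths of a fixed length. -/
lemma wellFounded_lexLen {T : TranslationQuiver} {x y : T.V} {O : OFam T x}
    (hO : IsOrderFamily T x y O) (n : ℕ) :
    WellFounded (fun p q : {p : Quiver.Path x y // p.length = n} => LexLt T O p.1 q.1) := by
  have : Finite {p : Quiver.Path x y // p.length = n} := by
    have := finite_paths_length T x n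
    apply Finite.of_injective
      (fun p : {p : Quiver.Path x y // p.length = n} =>
        (⟨⟨y, p.1⟩, p.2⟩ : {p : (z : T.V) × Quiver.Path x z // p.2.length = n}))
    rintro ⟨p, hp⟩ ⟨q, hq⟩ h
    simpa using h
  have : IsTrans _ (fun p q : {p : Quiver.Path x y // p.length = n} => LexLt T O p.1 q.1) :=
    ⟨fun _ _ _ => lexLt_trans hO⟩
  have : Std.Irrefl (fun p q : {p : Quiver.Path x y // p.length = n} => LexLt T O p.1 q.1) :=
    ⟨fun p => lexLt_irrefl O p.1⟩
  exact Finite.wellFounded_of_trans_of_irrefl _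

/-! ### Mesh-canonical relations and their leading paths -/

/-- The path `γ₂ β (σ β) γ₁`, one of the terms of the relation `γ₂ m_{τ w} γ₁`. -/
def term (T : TranslationQuiver) {x y w : T.V} (hw : ¬ T.Proj w)
    (γ₁ : Quiver.Path x (T.tau ⟨w, hw⟩)) (γ₂ : Quiver.Path w y)
    (β : (u : T.V) × T.Arrow u w) : Quiver.Path x y :=
  (γ₁.comp (meshPath T hw β)).comp γ₂

/-- The mesh-canonical relation `γ₂ m_{τ w} γ₁`. -/
noncomputable def meshRel (T : TranslationQuiver) (k : Type) [Field k] {x y w : T.V}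
    (hw : ¬ T.Proj w) (γ₁ : Quiver.Path x (T.tau ⟨w, hw⟩)) (γ₂ : Quiver.Path w y) :
    Quiver.Path x y →₀ k :=
  ∑ β : (u : T.V) × T.Arrow u w, Finsupp.single (T.term hw γ₁ γ₂ β) (1 : k)

/-- The arrow `σ β`, which starts at `τ w`, as an element of `OutArrow`. -/
abbrev sig (T : TranslationQuiver) {w : T.V} (hw : ¬ T.Proj w) (β : (u : T.V) × T.Arrow u w) :
    OutArrow T (T.tau ⟨w, hw⟩) :=
  ⟨β.1, T.sigma ⟨w, hw⟩ β.1 β.2⟩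

lemma sig_injective (T : TranslationQuiver) {w : T.V} (hw : ¬ T.Proj w) :
    Function.Injective (T.sig hw) := by
  rintro ⟨u, b⟩ ⟨u', b'⟩ h
  obtain rfl : u = u' := congrArg Sigma.fst h
  simpa [sig] using h

lemma sig_surjective (T : TranslationQuiver) {w : T.V} (hw : ¬ T.Proj w) :
    Function.Surjective (T.sig hw) := by
  rintro ⟨u, a⟩
  exact ⟨⟨u, (T.sigma ⟨w, hw⟩ u).symm a⟩, by simp [sig]⟩

lemma term_eq {T : TranslationQuiver} {x y w : T.V} (hw : ¬ T.Proj w)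
    (γ₁ : Quiver.Path x (T.tau ⟨w, hw⟩)) (γ₂ : Quiver.Path w y)
    (β : (u : T.V) × T.Arrow u w) :
    T.term hw γ₁ γ₂ β = (Quiver.Path.cons γ₁ (T.sig hw β).2).comp
      ((Quiver.Hom.toPath (V := T.V) β.2).comp γ₂) := by
  rw [← Quiver.Path.comp_assoc]
  rfl

lemma length_term {T : TranslationQuiver} {x y w : T.V} (hw : ¬ T.Proj w)
    (γ₁ : Quiver.Path x (T.tau ⟨w, hw⟩)) (γ₂ : Quiver.Path w y)
    (β : (u : T.V) × T.Arrow u w) :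
    (T.term hw γ₁ γ₂ β).length = γ₁.length + 2 + γ₂.length := by
  simp [term, meshPath]

lemma term_injective {T : TranslationQuiver} {x y w : T.V} (hw : ¬ T.Proj w)
    (γ₁ : Quiver.Path x (T.tau ⟨w, hw⟩)) (γ₂ : Quiver.Path w y) :
    Function.Injective (T.term hw γ₁ γ₂) := by
  intro β β' h
  rw [term_eq, term_eq] at h
  exact T.sig_injective hw (eq_of_cons_comp_eq _ _ _ _ _ h).1

lemma lexLt_term {T : TranslationQuiver} {x y w : T.V} {O : OFam T x} (hw : ¬ T.Proj w)
    (γ₁ : Quiver.Path x (T.tau ⟨w, hw⟩)) (γ₂ γ₂' : Quiver.Path w y)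
    (β β' : (u : T.V) × T.Arrow u w) (hne : β ≠ β') (h : O _ γ₁ (T.sig hw β) (T.sig hw β')) :
    LexLt T O (T.term hw γ₁ γ₂ β) (T.term hw γ₁ γ₂' β') :=
  ⟨_, γ₁, T.sig hw β, T.sig hw β', _, _, (T.sig_injective hw).ne hne, term_eq _ _ _ _,
    term_eq _ _ _ _, h⟩

lemma meshRel_apply_term {T : TranslationQuiver} {k : Type} [Field k] {x y w : T.V}
    (hw : ¬ T.Proj w) (γ₁ : Quiver.Path x (T.tau ⟨w, hw⟩)) (γ₂ : Quiver.Path w y)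
    (β : (u : T.V) × T.Arrow u w) : T.meshRel k hw γ₁ γ₂ (T.term hw γ₁ γ₂ β) = 1 := by
  classical
  simp [meshRel, Finsupp.finsetSum_apply, Finsupp.single_apply, (term_injective hw γ₁ γ₂).eq_iff]

lemma exists_term_of_meshRel_ne {T : TranslationQuiver} {k : Type} [Field k] {x y w : T.V}
    (hw : ¬ T.Proj w) (γ₁ : Quiver.Path x (T.tau ⟨w, hw⟩)) (γ₂ : Quiver.Path w y)
    (p : Quiver.Path x y) (h : T.meshRel k hw γ₁ γ₂ p ≠ 0) :
    ∃ β, p = T.term hw γ₁ γ₂ β := by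
  classical
  rw [meshRel, Finsupp.finsetSum_apply] at h
  obtain ⟨β, -, hβ⟩ := Finset.exists_ne_zero_of_sum_ne_zero h
  rw [Finsupp.single_apply] at hβ
  exact ⟨β, by_contra fun hne => hβ (if_neg (Ne.symm hne))⟩

/-- `σ β` is the `<_{γ₁}`-largest arrow starting at `τ w`. -/
def IsTop (T : TranslationQuiver) {x w : T.V} (O : OFam T x) (hw : ¬ T.Proj w)
    (γ₁ : Quiver.Path x (T.tau ⟨w, hw⟩)) (β : (u : T.V) × T.Arrow u w) : Prop :=
  ∀ b, b ≠ β → O _ γ₁ (T.sig hw b) (T.sig hw β)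

lemma isLpPath_meshRel {T : TranslationQuiver} {k : Type} [Field k] {x y w : T.V} {O : OFam T x}
    (hw : ¬ T.Proj w) (γ₁ : Quiver.Path x (T.tau ⟨w, hw⟩)) (γ₂ : Quiver.Path w y)
    (β : (u : T.V) × T.Arrow u w) (hβ : T.IsTop O hw γ₁ β) :
    IsLpPath T O (T.meshRel k hw γ₁ γ₂) (T.term hw γ₁ γ₂ β) := by
  refine ⟨by rw [meshRel_apply_term]; exact one_ne_zero, fun q hq hne => ?_⟩
  obtain ⟨b, rfl⟩ := exists_term_of_meshRel_ne hw γ₁ γ₂ q hq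
  have hb : b ≠ β := fun h => hne (h ▸ rfl)
  exact lexLt_term hw γ₁ γ₂ γ₂ b β hb (hβ b hb)

/-- The end points of the arrows starting at `τ w` are all predecessors of `y`, because `w` is; so
the order `<_{γ₁}` is total on these arrows and has a largest element. -/
lemma exists_isTop {T : TranslationQuiver} {x y w : T.V} {O : OFam T x}
    (hO : IsOrderFamily T x y O) (hw : ¬ T.Proj w) (γ₁ : Quiver.Path x (T.tau ⟨w, hw⟩))
    (γ₂ : Quiver.Path w y) (hne : Nonempty ((u : T.V) × T.Arrow u w)) :
    ∃ β, T.IsTop O hw γ₁ β := by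
  let R : ((u : T.V) × T.Arrow u w) → ((u : T.V) × T.Arrow u w) → Prop :=
    fun b c => O _ γ₁ (T.sig hw c) (T.sig hw b)
  have : IsTrans _ R := ⟨fun a b c hab hbc => (hO _ γ₁).2.1 _ _ _ hbc hab⟩
  have : Std.Irrefl R := ⟨fun a => (hO _ γ₁).1 _⟩
  have hwf : WellFounded R := Finite.wellFounded_of_trans_of_irrefl R
  obtain ⟨β, -, hβ⟩ := hwf.has_min Set.univ Set.univ_nonempty
  have hpred : ∀ b : (u : T.V) × T.Arrow u w, T.PredOf y (T.sig hw b).1 :=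
    fun b => ⟨(Quiver.Hom.toPath (V := T.V) b.2).comp γ₂⟩
  refine ⟨β, fun b hb => ?_⟩
  exact ((hO _ γ₁).2.2 _ _ (hpred b) (hpred β) ((T.sig_injective hw).ne hb)).resolve_right
    (hβ b trivial)

lemma exists_isTop_of_isLpPath {T : TranslationQuiver} {k : Type} [Field k] {x y w : T.V}
    {O : OFam T x} (hO : IsOrderFamily T x y O) (hw : ¬ T.Proj w)
    (γ₁ : Quiver.Path x (T.tau ⟨w, hw⟩)) (γ₂ : Quiver.Path w y) {p : Quiver.Path x y}
    (hp : IsLpPath T O (T.meshRel k hw γ₁ γ₂) p) :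
    ∃ β, T.IsTop O hw γ₁ β ∧ p = T.term hw γ₁ γ₂ β := by
  obtain ⟨b, -⟩ := exists_term_of_meshRel_ne hw γ₁ γ₂ p hp.1
  obtain ⟨β, hβ⟩ := exists_isTop hO hw γ₁ γ₂ ⟨b⟩
  exact ⟨β, hβ, isLpPath_unique hO hp (isLpPath_meshRel hw γ₁ γ₂ β hβ)⟩

/-! ### Relations with the same leading path -/

/-- The mesh-canonical relations whose leading path is smaller than `p` and as long as `p`. -/
def Smaller (T : TranslationQuiver) (k : Type) [Field k] {x y : T.V} (O : OFam T x)
    (p : Quiver.Path x y) : Set (Quiver.Path x y →₀ k) :=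
  { t | t ∈ MeshCanonical T k x y ∧
    ∃ q : Quiver.Path x y, q.length = p.length ∧ LexLt T O q p ∧ IsLpPath T O t q }

lemma meshRel_mem {T : TranslationQuiver} {k : Type} [Field k] {x y w : T.V} (hw : ¬ T.Proj w)
    (γ₁ : Quiver.Path x (T.tau ⟨w, hw⟩)) (γ₂ : Quiver.Path w y) :
    T.meshRel k hw γ₁ γ₂ ∈ MeshCanonical T k x y :=
  ⟨w, hw, γ₁, γ₂, rfl⟩

/-- Meshes at two consecutive vertices of a closed path cannot both give the leading path: the
second arrow of the first mesh would be both the largest arrow starting at `τ w'` and, the order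
being mesh-lexicographic, the smallest one. -/
lemma not_overlap {T : TranslationQuiver} {x y w w' : T.V} {O : OFam T x}
    (hclosed : ∀ p : Quiver.Path x y, T.Closed p) (hO : IsMeshLex T x y O)
    (hw : ¬ T.Proj w) (hw' : ¬ T.Proj w')
    (γ₁ : Quiver.Path x (T.tau ⟨w, hw⟩)) (γ₂ : Quiver.Path w y) (γ₂' : Quiver.Path w' y)
    (e : T.Arrow (T.tau ⟨w, hw⟩) (T.tau ⟨w', hw'⟩))
    (β : (u : T.V) × T.Arrow u w) (β' : (u : T.V) × T.Arrow u w')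
    (hβ : T.IsTop O hw γ₁ β) (hβ' : T.IsTop O hw' (Quiver.Path.cons γ₁ e) β')
    (h : T.term hw γ₁ γ₂ β = T.term hw' (Quiver.Path.cons γ₁ e) γ₂' β') : False := by
  have hcl := hclosed (T.term hw' (Quiver.Path.cons γ₁ e) γ₂' β')
  have htwo : T.TwoSucc (T.tau ⟨w', hw'⟩) :=
    closedCons_of_closed _ _ _ _ hcl hw' rfl
  obtain ⟨u, b⟩ := β
  obtain ⟨u', b'⟩ := β'
  have h1 : (Quiver.Path.cons γ₁ (T.sigma ⟨w, hw⟩ u b)).comp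
        ((Quiver.Hom.toPath (V := T.V) b).comp γ₂)
      = (Quiver.Path.cons γ₁ e).comp
        (((Quiver.Hom.toPath (V := T.V) (T.sigma ⟨w', hw'⟩ u' b')).comp
          (Quiver.Hom.toPath (V := T.V) b')).comp γ₂') := by
    rw [← Quiver.Path.comp_assoc, ← Quiver.Path.comp_assoc, ← Quiver.Path.comp_assoc]
    exact h
  obtain ⟨h2, h3⟩ := eq_of_cons_comp_eq _ _ _ _ _ h1
  obtain rfl : u = T.tau ⟨w', hw'⟩ := congrArg Sigma.fst h2
  have h3 := eq_of_heq h3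
  rw [Quiver.Path.comp_assoc] at h3
  have h4 := (eq_of_cons_comp_eq Quiver.Path.nil b (T.sigma ⟨w', hw'⟩ u' b') _ _ h3).1
  have h5 : T.sigma ⟨w, hw⟩ _ b = e := by simpa using h2
  have hmin := hO.2 w hw γ₁ _ e ⟨γ₂⟩
    ⟨(Quiver.Path.cons (Quiver.Path.cons Quiver.Path.nil (T.sigma ⟨w', hw'⟩ u' b')) b').comp γ₂'⟩
    (by
      intro c _ hc
      obtain ⟨c, rfl⟩ := T.sig_surjective hw c
      have : (⟨_, e⟩ : OutArrow T _) = T.sig hw ⟨_, b⟩ := by rw [← h5]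
      rw [this] at hc ⊢
      exact hβ c fun hcb => hc (by rw [hcb]))
  have h6 : (T.sigma ⟨w, hw⟩ (T.tau ⟨w', hw'⟩)).symm e = b := by rw [← h5]; simp
  rw [h6] at hmin
  have huniq : ∀ a : OutArrow T (T.tau ⟨w', hw'⟩), a = ⟨w, b⟩ := by
    intro a
    by_contra hne
    obtain ⟨c, rfl⟩ := T.sig_surjective hw' a
    have hlow := hmin _ (T.sig hw' c).2 ⟨(Quiver.Hom.toPath (V := T.V) c.2).comp γ₂'⟩ hne
    have htop : T.sig hw' ⟨u', b'⟩ = ⟨w, b⟩ := h4.symm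
    have hup := hβ' c (by rintro rfl; exact hne htop)
    rw [htop] at hup
    exact (hO.1 _ _).1 _ ((hO.1 _ _).2.1 _ _ _ hlow hup)
  obtain ⟨v, v', hvv, ⟨a⟩, ⟨a'⟩⟩ := htwo
  have hva := (huniq ⟨v, a⟩).trans (huniq ⟨v', a'⟩).symm
  exact hvv (congrArg Sigma.fst hva)

/-- Meshes at disjoint positions of the leading path: expanding `γ₂' m' η m γ₁` in both orders
expresses the difference of the two relations through relations with smaller leading paths. -/
lemma disjoint_sub_mem_span {T : TranslationQuiver} {k : Type} [Field k] {x y w w' : T.V}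
    {O : OFam T x} (hO : IsOrderFamily T x y O) (hw : ¬ T.Proj w) (hw' : ¬ T.Proj w')
    (γ₁ : Quiver.Path x (T.tau ⟨w, hw⟩)) (η : Quiver.Path w (T.tau ⟨w', hw'⟩))
    (γ₂' : Quiver.Path w' y)
    (β : (u : T.V) × T.Arrow u w) (β' : (u : T.V) × T.Arrow u w')
    (hβ : T.IsTop O hw γ₁ β) (hβ' : T.IsTop O hw' (T.term hw γ₁ η β) β') :
    T.meshRel k hw γ₁ (T.term hw' η γ₂' β') - T.meshRel k hw' (T.term hw γ₁ η β) γ₂' ∈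
      Submodule.span k (T.Smaller k O (T.term hw' (T.term hw γ₁ η β) γ₂' β')) := by
  classical
  have hassoc : ∀ b b', T.term hw γ₁ (T.term hw' η γ₂' b') b
      = T.term hw' (T.term hw γ₁ η b) γ₂' b' := by
    intro b b'
    simp only [term, Quiver.Path.comp_assoc]
  have hsum : ∑ b', T.meshRel k hw γ₁ (T.term hw' η γ₂' b')
      = ∑ b, T.meshRel k hw' (T.term hw γ₁ η b) γ₂' := by
    simp only [meshRel, hassoc]
    exact Finset.sum_comm
  rw [← Finset.add_sum_erase _ _ (Finset.mem_univ β'),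
    ← Finset.add_sum_erase _ _ (Finset.mem_univ β)] at hsum
  have hsub : T.meshRel k hw γ₁ (T.term hw' η γ₂' β') - T.meshRel k hw' (T.term hw γ₁ η β) γ₂'
      = ∑ b ∈ Finset.univ.erase β, T.meshRel k hw' (T.term hw γ₁ η b) γ₂'
        - ∑ b' ∈ Finset.univ.erase β', T.meshRel k hw γ₁ (T.term hw' η γ₂' b') := by
    rw [sub_eq_sub_iff_add_eq_add, hsum, add_comm]
  rw [hsub]
  refine Submodule.sub_mem _ (Submodule.sum_mem _ fun b hb => Submodule.subset_span ?_)
    (Submodule.sum_mem _ fun b' hb' => Submodule.subset_span ?_)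
  · have hne := Finset.ne_of_mem_erase hb
    obtain ⟨c, hc⟩ := exists_isTop hO hw' (T.term hw γ₁ η b) γ₂' ⟨β'⟩
    refine ⟨meshRel_mem _ _ _, _, ?_, ?_, isLpPath_meshRel hw' _ γ₂' c hc⟩
    · simp only [length_term]
    · rw [← hassoc, ← hassoc]
      exact lexLt_term hw γ₁ _ _ b β hne (hβ b hne)
  · have hne := Finset.ne_of_mem_erase hb'
    refine ⟨meshRel_mem _ _ _, _, ?_, ?_, isLpPath_meshRel hw γ₁ _ β hβ⟩
    · simp only [length_term]; omega
    · rw [hassoc]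
      exact lexLt_term hw' _ _ _ b' β' hne (hβ' b' hne)

lemma meshRel_sub_mem_span {T : TranslationQuiver} {k : Type} [Field k] {x y w w' : T.V}
    {O : OFam T x} (hclosed : ∀ p : Quiver.Path x y, T.Closed p) (hO : IsMeshLex T x y O)
    (hw : ¬ T.Proj w) (hw' : ¬ T.Proj w')
    (γ₁ : Quiver.Path x (T.tau ⟨w, hw⟩)) (γ₂ : Quiver.Path w y)
    (γ₁' : Quiver.Path x (T.tau ⟨w', hw'⟩)) (γ₂' : Quiver.Path w' y) {p : Quiver.Path x y}
    (hp : IsLpPath T O (T.meshRel k hw γ₁ γ₂) p)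
    (hp' : IsLpPath T O (T.meshRel k hw' γ₁' γ₂') p) (hl : γ₁.length ≤ γ₁'.length) :
    T.meshRel k hw γ₁ γ₂ - T.meshRel k hw' γ₁' γ₂' ∈ Submodule.span k (T.Smaller k O p) := by
  obtain ⟨β, hβ, h1⟩ := exists_isTop_of_isLpPath hO.1 hw γ₁ γ₂ hp
  obtain ⟨β', hβ', h2⟩ := exists_isTop_of_isLpPath hO.1 hw' γ₁' γ₂' hp'
  have h : γ₁.comp ((meshPath T hw β).comp γ₂) = γ₁'.comp ((meshPath T hw' β').comp γ₂') := by
    rw [← Quiver.Path.comp_assoc, ← Quiver.Path.comp_assoc]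
    exact h1.symm.trans h2
  obtain ⟨ε, h3, h4⟩ := exists_comp_of_comp_eq _ _ _ _ h hl
  rcases Nat.lt_or_ge ε.length 2 with hε | hε
  · obtain hε | hε : ε.length = 0 ∨ ε.length = 1 := by omega
    · -- Equal positions: the two relations coincide.
      have hww := T.tau_inj (Quiver.Path.eq_of_length_zero ε hε)
      obtain rfl : w = w' := congrArg Subtype.val hww
      obtain rfl := Quiver.Path.eq_nil_of_length_zero ε hε
      simp only [Quiver.Path.comp_nil] at h3
      subst h3
      simp only [Quiver.Path.nil_comp] at h4
      have hγ : γ₂ = γ₂' := by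
        obtain ⟨ζ, -, h6⟩ := exists_comp_of_comp_eq _ _ _ _ h4 (by simp [meshPath])
        have hζ : ζ.length = 0 := by
          have h7 := congrArg Quiver.Path.length h4
          have h8 := congrArg Quiver.Path.length h6
          simp [meshPath] at h7 h8
          omega
        rw [Quiver.Path.eq_nil_of_length_zero ζ hζ] at h6
        simpa using h6
      subst hγ
      rw [sub_self]
      exact Submodule.zero_mem _
    · obtain ⟨e, rfl⟩ := exists_eq_toPath ε hε
      subst h3
      exact (not_overlap hclosed hO hw hw' γ₁ γ₂ γ₂' e β β' hβ hβ' (h1.symm.trans h2)).elim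
  · obtain ⟨η, rfl, rfl⟩ := exists_comp_of_comp_eq _ _ _ _ h4 (by simpa [meshPath] using hε)
    have h5 : γ₁' = T.term hw γ₁ η β := by rw [h3, term, Quiver.Path.comp_assoc]
    subst h5
    have h6 : η.comp ((meshPath T hw' β').comp γ₂') = T.term hw' η γ₂' β' := by
      rw [term, Quiver.Path.comp_assoc]
    rw [h6, h2]
    exact disjoint_sub_mem_span hO.1 hw hw' γ₁ η γ₂' β β' hβ hβ'

lemma sub_mem_span_smaller {T : TranslationQuiver} {k : Type} [Field k] {x y : T.V}
    {O : OFam T x} (hclosed : ∀ p : Quiver.Path x y, T.Closed p) (hO : IsMeshLex T x y O)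
    {r s : Quiver.Path x y →₀ k} (hr : r ∈ MeshCanonical T k x y)
    (hs : s ∈ MeshCanonical T k x y) {p : Quiver.Path x y}
    (hp : IsLpPath T O r p) (hp' : IsLpPath T O s p) :
    r - s ∈ Submodule.span k (T.Smaller k O p) := by
  obtain ⟨w, hw, γ₁, γ₂, rfl⟩ := hr
  obtain ⟨w', hw', γ₁', γ₂', rfl⟩ := hs
  rcases le_total γ₁.length γ₁'.length with hl | hl
  · exact meshRel_sub_mem_span hclosed hO hw hw' γ₁ γ₂ γ₁' γ₂' hp hp' hl
  · rw [← neg_sub]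
    have hneg := meshRel_sub_mem_span hclosed hO hw' hw γ₁' γ₂' γ₁ γ₂ hp' hp hl
    exact Submodule.neg_mem _ hneg

/-- A mesh-canonical relation is zero only when `w` has no incoming arrow, i.e. the mesh is empty;
otherwise it has a leading path. -/
lemma eq_zero_or_exists_isLpPath {T : TranslationQuiver} {k : Type} [Field k] {x y : T.V}
    {O : OFam T x} (hO : IsOrderFamily T x y O) {r : Quiver.Path x y →₀ k}
    (hr : r ∈ MeshCanonical T k x y) : r = 0 ∨ ∃ p, IsLpPath T O r p := by
  obtain ⟨w, hw, γ₁, γ₂, rfl⟩ := hr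
  rcases isEmpty_or_nonempty ((u : T.V) × T.Arrow u w) with he | hne
  · left
    exact Finset.sum_of_isEmpty _
  · right
    obtain ⟨β, hβ⟩ := exists_isTop hO hw γ₁ γ₂ hne
    exact ⟨_, isLpPath_meshRel hw γ₁ γ₂ β hβ⟩

end TranslationQuiver

open TranslationQuiver in
/-- Theorem: with all paths from `x` to `y` closed and a mesh-lexicographic order
fixed on them, there is a subset `S(x,y)` of the mesh-canonical relations with
pairwise distinct leading basis elements generating all the other mesh-canonical
relations. -/
theorem exists_groebner_subset_of_meshCanonical (T : TranslationQuiver)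
    (k : Type) [Field k] (x y : T.V)
    (hclosed : ∀ p : Quiver.Path x y, T.Closed p)
    (hpre : ∀ (p q : Quiver.Path x y) (r : Quiver.Path y y), q = p.comp r → q = p)
    (O : OFam T x) (hO : IsMeshLex T x y O) :
    ∃ S ⊆ MeshCanonical T k x y,
      (∀ r ∈ S, ∀ s ∈ S, r ≠ s →
        ∀ p : Quiver.Path x y, IsLpPath T O r p → ¬ IsLpPath T O s p) ∧
      (∀ r ∈ MeshCanonical T k x y, r ∉ S → r ∈ Submodule.span k S) := by
  classical
  -- `f p` is a chosen relation with leading path `p`, whenever there is one.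
  have hchoose : ∀ p : Quiver.Path x y, ∃ s : Quiver.Path x y →₀ k,
      (∃ r ∈ MeshCanonical T k x y, IsLpPath T O r p) →
        s ∈ MeshCanonical T k x y ∧ IsLpPath T O s p := by
    intro p
    by_cases h : ∃ r ∈ MeshCanonical T k x y, IsLpPath T O r p
    · obtain ⟨r, hr⟩ := h
      exact ⟨r, fun _ => hr⟩
    · exact ⟨0, fun h' => (h h').elim⟩
  choose f hf using hchoose
  let S : Set (Quiver.Path x y →₀ k) :=
    { s | ∃ p, (∃ r ∈ MeshCanonical T k x y, IsLpPath T O r p) ∧ s = f p }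
  have hspan : ∀ n : ℕ, ∀ p : {p : Quiver.Path x y // p.length = n},
      ∀ r ∈ MeshCanonical T k x y, IsLpPath T O r p.1 → r ∈ Submodule.span k S := by
    intro n p
    induction p using (wellFounded_lexLen hO.1 n).induction with
    | _ p ih =>
      intro r hr hp
      obtain ⟨hs, hsp⟩ := hf p.1 ⟨r, hr, hp⟩
      have hsub : r - f p.1 ∈ Submodule.span k S := by
        refine Submodule.span_le.2 ?_ (sub_mem_span_smaller hclosed hO hr hs hp hsp)
        rintro t ⟨ht, q, hq, hlt, htq⟩
        exact ih ⟨q, hq.trans p.2⟩ hlt t ht htq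
      have hmem : f p.1 ∈ Submodule.span k S := Submodule.subset_span ⟨p.1, ⟨r, hr, hp⟩, rfl⟩
      simpa using Submodule.add_mem _ hsub hmem
  refine ⟨S, ?_, ?_, ?_⟩
  · rintro s ⟨p, hp, rfl⟩
    exact (hf p hp).1
  · rintro r ⟨p₁, h₁, rfl⟩ s ⟨p₂, h₂, rfl⟩ hne p hp hp'
    have e₁ := isLpPath_unique hO.1 (hf p₁ h₁).2 hp
    have e₂ := isLpPath_unique hO.1 (hf p₂ h₂).2 hp'
    exact hne (by rw [e₁, e₂])
  · intro r hr _
    rcases eq_zero_or_exists_isLpPath hO.1 hr with rfl | ⟨p, hp⟩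
    · exact Submodule.zero_mem _
    · exact hspan p.length ⟨p, rfl⟩ r hr hp
end

section
/- (Bimesh Lemma, part 2.) Let Δ be a translation quiver and x, y vertices such that every path from x to y is closed; fix a mesh-lexicographic order on the paths from x to y. Suppose x is non-injective and there is at least one arrow starting at x and ending at a predecessor of y, and let α_1 : x → x_1 be the largest such arrow with respect to the order <_{ε_x} induced on arrows starting at x. Set S = {r ∈ R_x : there is no s ∈ R(τ^{-1}x, y) with lp(r) = lp(s_{α_1})}. Then for every r ∈ S there is no s ∈ R(x,y) with s ≠ r and lp(r) = lp(s). -/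
namespace TranslationQuiver

/-! ### Initial arrows of paths -/

/-- A path beginning with an arrow determines that arrow and the remaining path. -/
theorem toPath_comp_inj {V : Type*} [Quiver V] {a b b' c : V} (e : a ⟶ b) (e' : a ⟶ b')
    (p : Quiver.Path b c) (q : Quiver.Path b' c) (h : e.toPath.comp p = e'.toPath.comp q) :
    (⟨b, e, p⟩ : Σ b, (a ⟶ b) × Quiver.Path b c) = ⟨b', e', q⟩ := by
  induction p with
  | nil =>
    cases q with
    | nil =>
      have := Quiver.Path.hom_heq_of_cons_eq_cons h
      cases this
      rfl
    | cons q f =>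
      have := congrArg Quiver.Path.length h
      simp [Quiver.Path.length_comp, Quiver.Path.length_toPath] at this
  | cons p f ih =>
    cases q with
    | nil =>
      have := congrArg Quiver.Path.length h
      simp [Quiver.Path.length_comp, Quiver.Path.length_toPath] at this
    | cons q g =>
      rw [Quiver.Path.comp_cons, Quiver.Path.comp_cons] at h
      obtain rfl := Quiver.Path.obj_eq_of_cons_eq_cons h
      have h1 := eq_of_heq (Quiver.Path.heq_of_cons_eq_cons h)
      have h2 := eq_of_heq (Quiver.Path.hom_heq_of_cons_eq_cons h)
      have := ih q h1
      subst h2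
      cases this
      rfl

theorem toPath_comp_inj_fst {V : Type*} [Quiver V] {a b b' c : V} {e : a ⟶ b} {e' : a ⟶ b'}
    {p : Quiver.Path b c} {q : Quiver.Path b' c} (h : e.toPath.comp p = e'.toPath.comp q) :
    (⟨b, e⟩ : Σ b, (a ⟶ b)) = ⟨b', e'⟩ := by
  cases toPath_comp_inj e e' p q h
  rfl

theorem exists_toPath_comp {V : Type*} [Quiver V] {a c : V} (p : Quiver.Path a c)
    (hp : p.length ≠ 0) :
    ∃ (b : V) (e : a ⟶ b) (q : Quiver.Path b c), p = e.toPath.comp q := by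
  obtain ⟨n, hn⟩ := Nat.exists_eq_succ_of_ne_zero hp
  obtain ⟨b, e, q, -, h⟩ := Quiver.Path.eq_toPath_comp_of_length_eq_succ p hn
  exact ⟨b, e, q, h⟩

theorem Closed.of_comp (T : TranslationQuiver) {a b c : T.V} (p : Quiver.Path a b)
    (q : Quiver.Path b c) (h : T.Closed (p.comp q)) : T.Closed p := by
  induction q with
  | nil => exact h
  | cons q e ih =>
    apply ih
    rw [Quiver.Path.comp_cons] at h
    generalize p.comp q = t at h
    cases t with
    | nil => simp [Closed]
    | cons t f =>
      simp only [Closed] at h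
      exact h.1

/-! ### The lexicographic order at the initial arrow -/

/-- If two paths differ at their first arrow, the lexicographic order compares these arrows. -/
theorem lexLt_first (T : TranslationQuiver) {x y : T.V} (O : OFam T x) {b b' : T.V}
    (e : T.Arrow x b) (e' : T.Arrow x b') (δ : Quiver.Path b y) (δ' : Quiver.Path b' y)
    (hne : (⟨b, e⟩ : OutArrow T x) ≠ ⟨b', e'⟩)
    (h : LexLt T O ((Quiver.Hom.toPath e).comp δ) ((Quiver.Hom.toPath e').comp δ')) :
    O x .nil ⟨b, e⟩ ⟨b', e'⟩ := by
  obtain ⟨z, γ, ⟨u, a⟩, ⟨u', a'⟩, δ₁, δ₁', ha, h1, h2, hlt⟩ := h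
  by_cases hγ : γ.length = 0
  · obtain rfl := Quiver.Path.eq_of_length_zero γ hγ
    obtain rfl := Quiver.Path.eq_nil_of_length_zero γ hγ
    cases toPath_comp_inj (V := T.V) e a δ δ₁ h1
    cases toPath_comp_inj (V := T.V) e' a' δ' δ₁' h2
    exact hlt
  · obtain ⟨c, f, γ', rfl⟩ := exists_toPath_comp γ hγ
    rw [← Quiver.Path.comp_cons, Quiver.Path.comp_assoc] at h1 h2
    cases toPath_comp_inj (V := T.V) _ _ _ _ h1
    cases toPath_comp_inj (V := T.V) _ _ _ _ h2
    exact absurd rfl hne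

/-- Removing a common first arrow `e` replaces the order family by its shift along `e`. -/
theorem lexLt_tail (T : TranslationQuiver) {x y : T.V} (O : OFam T x) {b : T.V}
    (e : T.Arrow x b) (δ δ' : Quiver.Path b y)
    (h : LexLt T O ((Quiver.Hom.toPath e).comp δ) ((Quiver.Hom.toPath e).comp δ')) :
    LexLt T (fun z γ => O z ((Quiver.Hom.toPath e).comp γ)) δ δ' := by
  obtain ⟨z, γ, ⟨u, a⟩, ⟨u', a'⟩, δ₁, δ₁', ha, h1, h2, hlt⟩ := h
  by_cases hγ : γ.length = 0
  · obtain rfl := Quiver.Path.eq_of_length_zero γ hγ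
    obtain rfl := Quiver.Path.eq_nil_of_length_zero γ hγ
    cases toPath_comp_inj (V := T.V) e a δ δ₁ h1
    cases toPath_comp_inj (V := T.V) e a' δ' δ₁' h2
    exact absurd rfl ha
  · obtain ⟨c, f, γ', rfl⟩ := exists_toPath_comp γ hγ
    rw [← Quiver.Path.comp_cons, Quiver.Path.comp_assoc] at h1 h2
    cases toPath_comp_inj (V := T.V) _ _ _ _ h1
    cases toPath_comp_inj (V := T.V) _ _ _ _ h2
    exact ⟨z, γ', ⟨u, a⟩, ⟨u', a'⟩, δ₁, δ₁', ha, rfl, rfl, hlt⟩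

/-! ### Supports of mesh-canonical relations -/

/-- Injectivity of `f` prevents the coefficients from adding up to zero in positive
characteristic. -/
theorem sum_single_ne_zero_iff {ι P k : Type*} [Fintype ι] [Field k] (f : ι → P)
    (hf : Function.Injective f) (q : P) :
    (∑ i, Finsupp.single (f i) (1 : k)) q ≠ 0 ↔ ∃ i, f i = q := by
  classical
  rw [Finsupp.finsetSum_apply]
  constructor
  · intro h
    obtain ⟨i, -, hi⟩ := Finset.exists_ne_zero_of_sum_ne_zero h
    refine ⟨i, ?_⟩
    by_contra hne
    exact hi (Finsupp.single_eq_of_ne' hne)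
  · rintro ⟨i, rfl⟩
    rw [Finset.sum_eq_single i]
    · simp
    · intro j _ hj
      exact Finsupp.single_eq_of_ne' (fun h => hj (hf h))
    · simp

theorem meshPath_comp_injective (T : TranslationQuiver) {x w y : T.V} (hw : ¬ T.Proj w)
    (γ₁ : Quiver.Path x (T.tau ⟨w, hw⟩)) (γ₂ : Quiver.Path w y) :
    Function.Injective (fun β : (u : T.V) × T.Arrow u w =>
      (γ₁.comp (meshPath T hw β)).comp γ₂) := by
  rintro ⟨u, b⟩ ⟨u', b'⟩ h
  have h1 := Quiver.Path.comp_injective_left _ h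
  have h2 := Quiver.Path.comp_injective_right _ h1
  have h3 := Quiver.Path.obj_eq_of_cons_eq_cons h2
  have h4 := Quiver.Path.hom_heq_of_cons_eq_cons h2
  dsimp only at h3 h4
  subst h3
  cases h4
  rfl

theorem meshPath_comp (T : TranslationQuiver) {w y : T.V} (hw : ¬ T.Proj w)
    {u : T.V} (b : T.Arrow u w) (γ : Quiver.Path w y) :
    (meshPath T hw ⟨u, b⟩).comp γ =
      (Quiver.Hom.toPath (T.sigma ⟨w, hw⟩ u b)).comp ((Quiver.Hom.toPath b).comp γ) := by
  rw [← Quiver.Path.comp_assoc]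
  rfl

/-- The leading path of a relation derived from the mesh of `τ w` is `γ (σ⁻¹ α) α`,
where `α` is the largest arrow starting at `τ w` and ending at a predecessor of `y`. -/
theorem lp_meshAt (T : TranslationQuiver) (k : Type) [Field k] {w : T.V} (hw : ¬ T.Proj w)
    {y : T.V} (O : OFam T (T.tau ⟨w, hw⟩)) (hO : IsOrderFamily T (T.tau ⟨w, hw⟩) y O)
    {v : T.V} (α : T.Arrow (T.tau ⟨w, hw⟩) v)
    (hmax : ∀ b : OutArrow T (T.tau ⟨w, hw⟩), T.PredOf y b.1 → b ≠ ⟨v, α⟩ →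
      O _ Quiver.Path.nil b ⟨v, α⟩)
    (γ : Quiver.Path w y) (p : Quiver.Path (T.tau ⟨w, hw⟩) y)
    (hp : IsLpPath T O (∑ β : (u : T.V) × T.Arrow u w,
      Finsupp.single ((meshPath T hw β).comp γ) (1 : k)) p) :
    p = (Quiver.Hom.toPath α).comp
      ((Quiver.Hom.toPath ((T.sigma ⟨w, hw⟩ v).symm α)).comp γ) := by
  have hinj : Function.Injective (fun β : (u : T.V) × T.Arrow u w => (meshPath T hw β).comp γ) := by
    simpa using meshPath_comp_injective T hw .nil γ
  obtain ⟨h0, hlt⟩ := hp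
  obtain ⟨⟨u, b⟩, rfl⟩ := (sum_single_ne_zero_iff _ hinj _).1 h0
  have hα := hlt ((meshPath T hw ⟨v, (T.sigma ⟨w, hw⟩ v).symm α⟩).comp γ)
    ((sum_single_ne_zero_iff _ hinj _).2 ⟨_, rfl⟩)
  simp only [meshPath_comp, Equiv.apply_symm_apply] at hα ⊢
  by_cases hne : (⟨u, T.sigma ⟨w, hw⟩ u b⟩ : OutArrow T (T.tau ⟨w, hw⟩)) = ⟨v, α⟩
  · cases hne
    simp
  · exfalso
    have h1 := hmax _ ⟨(Quiver.Hom.toPath b).comp γ⟩ hne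
    have h2 := lexLt_first T O _ _ _ _ (Ne.symm hne) (hα fun h => hne (toPath_comp_inj_fst (V := T.V) h).symm)
    exact (hO _ _).1 _ ((hO _ _).2.1 _ _ _ h1 h2)

end TranslationQuiver

open TranslationQuiver in
/-- The Bimesh Lemma, part 2.  With notation as in part 1: no element of `S`
shares its leading basis element with a different mesh-canonical relation
between `x = τ w` and `y`. -/
theorem bimesh_lemma_part2 (T : TranslationQuiver) (k : Type) [Field k]
    (w : T.V) (hw : ¬ T.Proj w) (y : T.V)
    (hclosed : ∀ p : Quiver.Path (T.tau ⟨w, hw⟩) y, T.Closed p)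
    (hpre : ∀ (p q : Quiver.Path (T.tau ⟨w, hw⟩) y) (r : Quiver.Path y y),
      q = p.comp r → q = p)
    (O : OFam T (T.tau ⟨w, hw⟩)) (hO : IsMeshLex T (T.tau ⟨w, hw⟩) y O)
    (α₁ : OutArrow T (T.tau ⟨w, hw⟩)) (hα₁pred : T.PredOf y α₁.1)
    (hα₁max : ∀ b : OutArrow T (T.tau ⟨w, hw⟩), T.PredOf y b.1 → b ≠ α₁ →
      O _ Quiver.Path.nil b α₁) :
    ∀ r ∈ {r ∈ MeshAtSet T k hw y |
        ¬ ∃ s ∈ MeshCanonical T k w y, ∃ p : Quiver.Path (T.tau ⟨w, hw⟩) y,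
          IsLpPath T O r p ∧ IsLpPath T O (derComesh T k hw α₁ s) p},
      ¬ ∃ s ∈ MeshCanonical T k (T.tau ⟨w, hw⟩) y, s ≠ r ∧
        ∃ p : Quiver.Path (T.tau ⟨w, hw⟩) y, IsLpPath T O r p ∧ IsLpPath T O s p := by
  rintro r ⟨⟨γ, rfl⟩, hr⟩ ⟨s, ⟨W, hW, γ₁, γ₂, rfl⟩, hsr, p, hpr, hps⟩
  obtain ⟨x₁, α⟩ := α₁
  obtain rfl := lp_meshAt T k hw O hO.1 α hα₁max γ p hpr
  have hinj := meshPath_comp_injective T hW γ₁ γ₂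
  obtain ⟨⟨u, b⟩, hb⟩ := (sum_single_ne_zero_iff _ hinj _).1 hps.1
  dsimp only at hb
  by_cases h0 : γ₁.length = 0
  -- The initial part is trivial, so `s` is derived from the mesh of `x` as well.
  · have hWw := T.tau_inj (Quiver.Path.eq_of_length_zero γ₁ h0)
    cases hWw
    obtain rfl := Quiver.Path.eq_nil_of_length_zero γ₁ h0
    rw [Quiver.Path.nil_comp, meshPath_comp] at hb
    cases toPath_comp_inj_fst (V := T.V) hb
    rw [Equiv.symm_apply_apply] at hb
    obtain rfl :=
      Quiver.Path.comp_injective_right _ (Quiver.Path.comp_injective_right _ hb)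
    exact hsr (by simp only [Quiver.Path.nil_comp])
  obtain ⟨v, e, γ₁, rfl⟩ := exists_toPath_comp γ₁ h0
  rw [Quiver.Path.comp_assoc, Quiver.Path.comp_assoc] at hb
  have hb1 := toPath_comp_inj (V := T.V) _ _ _ _ hb
  obtain rfl : v = x₁ := congrArg Sigma.fst hb1
  have hb2 := eq_of_heq (Sigma.mk.inj hb1).2
  obtain rfl : e = α := congrArg Prod.fst hb2
  have hb3 := congrArg Prod.snd hb2
  dsimp only at hb3
  -- From here on `γ₁` is what remains of the initial part of `s` after the arrow `α`.
  by_cases h1 : γ₁.length = 0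
  -- The initial part is the arrow `α`, so `s` comes from the mesh of `x₁ = τ W`.
  · obtain rfl := Quiver.Path.eq_of_length_zero γ₁ h1
    obtain rfl := Quiver.Path.eq_nil_of_length_zero γ₁ h1
    rw [Quiver.Path.nil_comp, meshPath_comp] at hb3
    have hc1 := toPath_comp_inj (V := T.V) _ _ _ _ hb3
    obtain rfl : u = w := congrArg Sigma.fst hc1
    have hc2 := eq_of_heq (Sigma.mk.inj hc1).2
    obtain rfl : (Quiver.Hom.toPath b).comp γ₂ = γ := congrArg Prod.snd hc2
    have htwo : T.TwoSucc (T.tau ⟨W, hW⟩) := by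
      have : T.Closed (((Quiver.Hom.toPath e).cons (T.sigma ⟨W, hW⟩ u b)).cons b) :=
        Closed.of_comp T _ _ (hclosed (((Quiver.Hom.toPath e).comp (meshPath T hW ⟨u, b⟩)).comp γ₂))
      rw [Closed] at this
      exact this.2 hW rfl
    obtain ⟨v', f, hne⟩ : ∃ (v' : T.V) (f : T.Arrow (T.tau ⟨W, hW⟩) v'),
        (⟨v', f⟩ : OutArrow T (T.tau ⟨W, hW⟩)) ≠ ⟨u, (T.sigma ⟨u, hw⟩ _).symm e⟩ := by
      obtain ⟨v₁, v₂, hv, ⟨f₁⟩, ⟨f₂⟩⟩ := htwo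
      by_cases h : v₁ = u
      · exact ⟨v₂, f₂, fun h' => hv (h.trans (congrArg Sigma.fst h').symm)⟩
      · exact ⟨v₁, f₁, fun h' => h (congrArg Sigma.fst h')⟩
    have hlt := hps.2 _ ((sum_single_ne_zero_iff _ hinj _).2
      ⟨⟨v', (T.sigma ⟨W, hW⟩ v').symm f⟩, rfl⟩)
    simp only [Quiver.Path.comp_nil, Quiver.Path.comp_assoc, meshPath_comp,
      Equiv.apply_symm_apply] at hlt
    have hlt' := lexLt_first T _ _ _ _ _ hne (lexLt_tail T O _ _ _ (hlt fun h =>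
      hne (toPath_comp_inj_fst (V := T.V) (Quiver.Path.comp_injective_right _ h))))
    have hgt := hO.2 u hw .nil _ e ⟨(Quiver.Hom.toPath b).comp γ₂⟩ hα₁pred hα₁max v' f
      ⟨(Quiver.Hom.toPath ((T.sigma ⟨W, hW⟩ v').symm f)).comp γ₂⟩ hne
    exact (hO.1 _ _).1 _ ((hO.1 _ _).2.1 _ _ _ hlt' hgt)
  -- The initial part begins with `α` and `σ⁻¹ α`, so `s` is derived from the comesh of `x`.
  · obtain ⟨v', f, γ₁, rfl⟩ := exists_toPath_comp γ₁ h1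
    rw [Quiver.Path.comp_assoc] at hb3
    have hc1 := toPath_comp_inj (V := T.V) _ _ _ _ hb3
    obtain rfl : v' = w := congrArg Sigma.fst hc1
    have hc2 := eq_of_heq (Sigma.mk.inj hc1).2
    obtain rfl : f = (T.sigma ⟨v', hw⟩ _).symm e := congrArg Prod.fst hc2
    refine hr ⟨_, ⟨W, hW, γ₁, γ₂, rfl⟩, _, hpr, ?_⟩
    convert hps using 1
    rw [derComesh, Finsupp.mapDomain_finsetSum]
    refine Finset.sum_congr rfl fun β _ => ?_
    rw [Finsupp.mapDomain_single]
    congr 1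
    simp only [← Quiver.Path.comp_assoc]
    rfl
end
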